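/- arXiv:2106.00618 — 3 statements merged into one kernel-verified Lean document; each statement's English description precedes it below -/
import Mathlib

section
/- If there exists a locally countable, countably compact T₁ space of cardinality κ > ω, then the cofinality of ([κ]^ω, ⊆) equals κ, i.e., there is a family of κ countable subsets of κ such that every countable subset of κ is contained in one of them. -/
open Cardinal Set

/-- if there is a locally countable, countably compact T₁ space of
cardinality `κ > ω`, then `cof([κ]^ω, ⊆) = κ`: there is a family of `κ` many
countable subsets of `κ` such that every countable subset of `κ` is contained in
one of them. -/
theorem stmt11 (κ : Cardinal.{0}) (hκ : ℵ₀ < κ)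
    (X : Type) [TopologicalSpace X] [T1Space X] (hcard : #X = κ)
    (hloc : ∀ x : X, ∃ U ∈ nhds x, U.Countable)
    (hcc : ∀ A : Set X, A.Countable → A.Infinite →
      ∃ x : X, ∀ U ∈ nhds x, (U ∩ A).Infinite) :
    ∃ C : Set (Set Ordinal.{0}),
      #C = Cardinal.lift.{1} κ ∧
      (∀ c ∈ C, c ⊆ Set.Iio κ.ord ∧ c.Countable) ∧
      ∀ A : Set Ordinal, A ⊆ Set.Iio κ.ord → A.Countable →
        ∃ c ∈ C, A ⊆ c := by
  classical
  have hX : ℵ₀ ≤ #X := by rw [hcard]; exact hκ.le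
  haveI : Infinite X := Cardinal.infinite_iff.2 hX
  obtain ⟨f⟩ : Nonempty (List X ≃ X) := Cardinal.eq.1 (Cardinal.mk_list_eq_mk X)
  have hIio : #(Set.Iio κ.ord) = Cardinal.lift.{1} κ := by
    rw [Cardinal.mk_Iio_ordinal, Cardinal.card_ord]
  obtain ⟨e⟩ : Nonempty (X ≃ Set.Iio κ.ord) := by
    rw [← Cardinal.lift_mk_eq', hIio, hcard]
    simp
  choose U hU hUc using hloc
  let D : X → Set Ordinal.{0} := fun x =>
    ⋃ y ∈ U x, (fun z => (e z : Ordinal.{0})) '' {z | z ∈ f.symm y}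
  have hDc : ∀ x, (D x).Countable := fun x =>
    (hUc x).biUnion fun y _ => ((f.symm y).finite_toSet.countable).image _
  have hDs : ∀ x, D x ⊆ Set.Iio κ.ord := by
    intro x o ho
    simp only [D, Set.mem_iUnion] at ho
    obtain ⟨y, _, z, _, rfl⟩ := ho
    exact (e z).2
  refine ⟨Set.range D ∪ (fun o => ({o} : Set Ordinal.{0})) '' Set.Iio κ.ord, ?_, ?_, ?_⟩
  · have hs : #((fun o => ({o} : Set Ordinal.{0})) '' Set.Iio κ.ord) = Cardinal.lift.{1} κ := by
      rw [Cardinal.mk_image_eq Set.singleton_injective, hIio]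
    have hr : #(Set.range D) ≤ Cardinal.lift.{1} κ := by
      have := Cardinal.mk_range_le_lift (f := D)
      rw [hcard] at this
      simpa using this
    apply le_antisymm
    · refine (Cardinal.mk_union_le _ _).trans ?_
      rw [hs]
      refine (add_le_add_left hr _).trans ?_
      rw [Cardinal.add_eq_self]
      simpa using hκ.le
    · rw [← hs]
      exact Cardinal.mk_le_mk_of_subset Set.subset_union_right
  · rintro c (⟨x, rfl⟩ | ⟨o, ho, rfl⟩)
    · exact ⟨hDs x, hDc x⟩
    · exact ⟨by simpa using ho, Set.countable_singleton o⟩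
  · intro A hA hAc
    rcases A.eq_empty_or_nonempty with rfl | hne
    · exact ⟨D (Classical.arbitrary X), Or.inl ⟨_, rfl⟩, Set.empty_subset _⟩
    obtain ⟨a, rfl⟩ := hAc.exists_eq_range hne
    let b : ℕ → X := fun n => e.symm ⟨a n, hA ⟨n, rfl⟩⟩
    let g : ℕ → X := fun n => f ((List.range n).map b)
    have hg : Function.Injective g := by
      intro m n h
      have := congrArg List.length (f.injective h)
      simpa using this
    obtain ⟨x, hx⟩ := hcc (Set.range g) (Set.countable_range g) (Set.infinite_range_of_injective hg)
    refine ⟨D x, Or.inl ⟨x, rfl⟩, ?_⟩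
    rintro _ ⟨n, rfl⟩
    have hinf := hx (U x) (hU x)
    obtain ⟨y, ⟨hyU, m, rfl⟩, hy⟩ := hinf.exists_notMem_finite ((Set.finite_Iic n).image g)
    have hm : n < m := by
      by_contra h
      exact hy ⟨m, not_lt.1 h, rfl⟩
    simp only [D, Set.mem_iUnion]
    refine ⟨g m, hyU, b n, ?_, ?_⟩
    · simp only [g, Equiv.symm_apply_apply, Set.mem_setOf_eq]
      exact List.mem_map.2 ⟨n, List.mem_range.2 hm, rfl⟩
    · simp [b]
end

section
/- If κ is a cardinal with ω ≤ κ = κ^ω ≤ 2^𝔠, then there exists a locally countable SAU space of cardinality κ. In particular (κ = 2^𝔠), there is in ZFC a locally countable SAU space of cardinality 2^𝔠. -/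
open Cardinal Set

/-- A SAU (strongly anti-Urysohn) space. -/
def IsSAU (X : Type*) [TopologicalSpace X] : Prop :=
  T2Space X ∧
    (∃ x y : X, x ≠ y ∧ ¬IsOpen ({x} : Set X) ∧ ¬IsOpen ({y} : Set X)) ∧
    ∀ F G : Set X, IsClosed F → IsClosed G → F.Infinite → G.Infinite →
      (F ∩ G).Nonempty

namespace KunenWP

/-- Index type for rows and columns (of size continuum). -/
abbrev T := ℕ → Bool

/-- Restriction of a branch to the first `n` places. -/
def res (n : ℕ) (i : T) : Fin n → Bool := fun k => i k

/-- The countable carrier set. -/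
abbrev P := Σ n : ℕ, ((Fin n → Bool) → Finset (Fin n → Bool))

/-- The independent linked family. -/
def L (i α : T) (m : ℕ) : Set P :=
  {p | (p.2 (res p.1 i)).card ≤ m ∧ res p.1 α ∈ p.2 (res p.1 i)}

/-- Finite intersections from the linked family. -/
def G (s : Finset T) (m : T → ℕ) (a : T → Finset T) : Set P :=
  {p | ∀ i ∈ s, ∀ α ∈ a i, p ∈ L i α (m i)}

lemma L_mono (i α : T) {m k : ℕ} (h : m ≤ k) : L i α m ⊆ L i α k :=
  fun _ hp => ⟨hp.1.trans h, hp.2⟩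

lemma res_sep (s : Finset T) : ∃ N, ∀ n, N ≤ n → Set.InjOn (res n) (s : Set T) := by
  classical
  have h : ∀ q : T × T, ∃ k, q.1 ≠ q.2 → q.1 k ≠ q.2 k := by
    intro q
    by_cases h : q.1 = q.2
    · exact ⟨0, fun h' => absurd h h'⟩
    · obtain ⟨k, hk⟩ := Function.ne_iff.mp h
      exact ⟨k, fun _ => hk⟩
  choose k hk using h
  refine ⟨(s ×ˢ s).sup (fun q => k q + 1), fun n hn x hx y hy hxy => ?_⟩
  by_contra hne
  have h1 : k (x, y) + 1 ≤ n :=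
    (Finset.le_sup (f := fun q => k q + 1) (Finset.mk_mem_product hx hy)).trans hn
  exact hk (x, y) hne (congrFun hxy ⟨k (x, y), h1⟩)

lemma finite_lt (N : ℕ) : {p : P | p.1 < N}.Finite := by
  have : {p : P | p.1 < N} ⊆ ⋃ n ∈ Set.Iio N, Set.range (fun f => (⟨n, f⟩ : P)) := by
    rintro ⟨n, f⟩ h
    simp only [Set.mem_iUnion]
    exact ⟨n, h, f, rfl⟩
  exact ((Set.finite_Iio N).biUnion (fun n _ => Set.finite_range _)).subset this

lemma linked (i : T) (a : Finset T) (m : ℕ) (h : m < a.card) :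
    {p | ∀ α ∈ a, p ∈ L i α m}.Finite := by
  classical
  obtain ⟨N, hN⟩ := res_sep a
  refine (finite_lt N).subset fun p hp => ?_
  by_contra hlt
  have hinj := hN p.1 (not_lt.mp hlt)
  have h1 : a.image (res p.1) ⊆ p.2 (res p.1 i) := by
    intro y hy
    obtain ⟨α, hα, rfl⟩ := Finset.mem_image.mp hy
    exact (hp α hα).2
  have h2 := Finset.card_le_card h1
  rw [Finset.card_image_of_injOn hinj] at h2
  have : a.Nonempty := Finset.card_pos.mp (by omega)
  obtain ⟨α, hα⟩ := this
  have := (hp α hα).1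
  omega

lemma indep (s : Finset T) (m : T → ℕ) (a : T → Finset T) (h : ∀ i ∈ s, (a i).card ≤ m i) :
    (G s m a).Infinite := by
  classical
  obtain ⟨N, hN⟩ := res_sep s
  have key : ∀ n, N ≤ n → ∃ p ∈ G s m a, p.1 = n := by
    intro n hn
    refine ⟨⟨n, fun r => if hr : ∃ i ∈ s, res n i = r then (a hr.choose).image (res n) else ∅⟩,
      ?_, rfl⟩
    intro i hi α hα
    have hr : ∃ i' ∈ s, res n i' = res n i := ⟨i, hi, rfl⟩
    have he : hr.choose = i := hN n hn hr.choose_spec.1 hi hr.choose_spec.2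
    simp only [L, Set.mem_ofPred_eq]
    rw [dif_pos hr, he]
    exact ⟨Finset.card_image_le.trans (h i hi), Finset.mem_image_of_mem _ hα⟩
  intro hfin
  obtain ⟨B, hB⟩ := (hfin.image Sigma.fst).bddAbove
  obtain ⟨p, hp, hpn⟩ := key (max N (B + 1)) (le_max_left _ _)
  have : p.1 ≤ B := hB ⟨p, hp, rfl⟩
  have := le_max_right N (B + 1)
  omega

/-- `F` is independent modulo the lost rows `Q`. -/
def Ind (F : Filter P) (Q : Set T) : Prop :=
  ∀ (s : Finset T) (m : T → ℕ) (a : T → Finset T), (∀ i ∈ s, i ∉ Q) →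
    (∀ i ∈ s, (a i).card ≤ m i) → ∀ U ∈ F, (U ∩ G s m a).Nonempty

/-- Partial intersections. -/
def W (U : ℕ → Set P) (n : ℕ) : Set P := {p | ∀ k < n, p ∈ U k}

lemma W_anti (U : ℕ → Set P) {m n : ℕ} (h : m ≤ n) : W U n ⊆ W U m :=
  fun _ hp k hk => hp k (hk.trans_le h)

/-- The task `U` has been taken care of by the filter `F`. -/
def Done (U : ℕ → Set P) (F : Filter P) : Prop :=
  (∃ n, (W U n)ᶜ ∈ F) ∨ ∃ V : T → Set P, (∀ α, V α ∈ F) ∧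
    ∀ a : Finset T, ({p | ∀ α ∈ a, p ∈ V α} \ W U a.card).Finite

lemma Done.mono {U : ℕ → Set P} {F F' : Filter P} (h : Done U F) (hF : F' ≤ F) : Done U F' := by
  rcases h with ⟨n, h⟩ | ⟨V, h, h'⟩
  · exact Or.inl ⟨n, hF h⟩
  · exact Or.inr ⟨V, fun α => hF (h α), h'⟩

lemma step (F : Filter P) (Q : Set T) (hF : Ind F Q) (i₀ : T) (hi₀ : i₀ ∉ Q) (U : ℕ → Set P) :
    ∃ F' Q', F' ≤ F ∧ Q ⊆ Q' ∧ (Q' \ Q).Finite ∧ Ind F' Q' ∧ Done U F' := by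
  classical
  by_cases hI : Ind (F ⊓ ⨅ n, Filter.principal (W U n)) Q
  · let V : T → Set P := fun α => {p | ∀ m, p ∈ W U m → p ∉ W U (m + 1) → p ∈ L i₀ α m}
    refine ⟨(F ⊓ ⨅ n, Filter.principal (W U n)) ⊓ ⨅ α, Filter.principal (V α), insert i₀ Q,
      inf_le_left.trans inf_le_left, Set.subset_insert _ _,
      (Set.finite_singleton i₀).subset ?_, ?_, Or.inr ⟨V, ?_, ?_⟩⟩
    · rintro x ⟨rfl | hx, hx'⟩
      · rfl
      · exact absurd hx hx'
    · intro s m a hs ha X hX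
      obtain ⟨A, hA, B, hB, rfl⟩ := Filter.mem_inf_iff.mp hX
      obtain ⟨b, hb⟩ := Filter.mem_iInf_finite B |>.mp hB
      rw [Filter.iInf_principal_finset, Filter.mem_principal] at hb
      have hi : i₀ ∉ s := fun h => hs _ h (Set.mem_insert _ _)
      have hWk : W U b.card ∈ F ⊓ ⨅ n, Filter.principal (W U n) :=
        Filter.mem_inf_of_right (Filter.mem_iInf_of_mem b.card (Filter.mem_principal_self _))
      obtain ⟨p, ⟨hpA, hpW⟩, hpG⟩ := hI (insert i₀ s) (Function.update m i₀ b.card)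
        (Function.update a i₀ b) (by
          intro i hi'
          rcases Finset.mem_insert.mp hi' with rfl | h
          · exact hi₀
          · exact fun hq => hs i h (Set.mem_insert_of_mem _ hq)) (by
          intro i hi'
          rcases Finset.mem_insert.mp hi' with rfl | h
          · simp
          · have : i ≠ i₀ := fun e => hi (e ▸ h)
            simp [this, ha i h]) (A ∩ W U b.card) (Filter.inter_mem hA hWk)
      refine ⟨p, ⟨hpA, hb ?_⟩, ?_⟩
      · simp only [Set.mem_iInter]
        intro α hα k hk hk'
        have h1 := hpG i₀ (Finset.mem_insert_self _ _) α (by simpa using hα)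
        simp only [Function.update_self] at h1
        refine L_mono _ _ ?_ h1
        by_contra hlt
        exact hk' (W_anti U (by omega) hpW)
      · intro i h α hα
        have hne : i ≠ i₀ := fun e => hi (e ▸ h)
        have := hpG i (Finset.mem_insert_of_mem h) α (by simpa [hne] using hα)
        simpa [hne] using this
    · intro α
      exact Filter.mem_inf_of_right (Filter.mem_iInf_of_mem α (Filter.mem_principal_self _))
    · intro a
      have : ({p | ∀ α ∈ a, p ∈ V α} \ W U a.card) ⊆
          ⋃ m ∈ Set.Iio a.card, {p | ∀ α ∈ a, p ∈ L i₀ α m} := by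
        rintro p ⟨hp, hpW⟩
        have hex : ∃ n, p ∉ W U n := ⟨_, hpW⟩
        have h0 : Nat.find hex ≠ 0 := by
          intro h
          have := Nat.find_spec hex
          rw [h] at this
          exact this (fun k hk => absurd hk (by omega))
        obtain ⟨m, hm⟩ := Nat.exists_eq_succ_of_ne_zero h0
        have h1 : p ∈ W U m := by
          by_contra h
          have := Nat.find_min' hex h
          omega
        have h2 : p ∉ W U (m + 1) := by
          have := Nat.find_spec hex
          rwa [hm] at this
        simp only [Set.mem_iUnion]
        refine ⟨m, ?_, fun α hα => hp α hα m h1 h2⟩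
        have := Nat.find_min' hex hpW
        simp only [Set.mem_Iio]
        omega
      exact ((Set.finite_Iio _).biUnion fun m hm => linked i₀ a m hm).subset this
  · unfold Ind at hI
    push Not at hI
    obtain ⟨s, m, a, hs, ha, X, hX, hXG⟩ := hI
    obtain ⟨A, hA, B, hB, rfl⟩ := Filter.mem_inf_iff.mp hX
    rw [Filter.mem_iInf_of_directed] at hB
    swap
    · intro x y
      exact ⟨max x y, Filter.principal_mono.mpr (W_anti U (le_max_left _ _)),
        Filter.principal_mono.mpr (W_anti U (le_max_right _ _))⟩
    obtain ⟨n, hn⟩ := hB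
    rw [Filter.mem_principal] at hn
    refine ⟨F ⊓ Filter.principal (G s m a), Q ∪ s, inf_le_left, Set.subset_union_left,
      s.finite_toSet.subset ?_, ?_, Or.inl ⟨n, ?_⟩⟩
    · rintro x ⟨hx | hx, hx'⟩
      · exact absurd hx hx'
      · exact hx
    · intro s' m' a' hs' ha' Y hY
      rw [Filter.mem_inf_principal] at hY
      obtain ⟨p, hpY, hpG⟩ := hF (s ∪ s') (fun i => if i ∈ s then m i else m' i)
        (fun i => if i ∈ s then a i else a' i) (by
          intro i hi
          rcases Finset.mem_union.mp hi with h | h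
          · exact hs i h
          · exact fun hq => hs' i h (Or.inl hq)) (by
          intro i hi
          by_cases h : i ∈ s
          · simpa [h] using ha i h
          · have : i ∈ s' := (Finset.mem_union.mp hi).resolve_left h
            simpa [h] using ha' i this) _ hY
      have hG1 : p ∈ G s m a := by
        intro i hi α hα
        have := hpG i (Finset.mem_union_left _ hi) α (by simpa [hi] using hα)
        simpa [hi] using this
      refine ⟨p, hpY hG1, ?_⟩
      intro i hi α hα
      have hn : i ∉ s := fun h => hs' i hi (Or.inr h)
      have := hpG i (Finset.mem_union_right _ hi) α (by simpa [hn] using hα)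
      simpa [hn] using this
    · rw [Filter.mem_inf_principal]
      filter_upwards [hA] with p hp hpG hpW
      have : p ∈ (A ∩ B) ∩ G s m a := ⟨⟨hp, hn hpW⟩, hpG⟩
      rw [hXG] at this
      exact this

lemma step_fun : ∃ st : (ℕ → Set P) → Filter P × Set T → Filter P × Set T, ∀ U x,
    (st U x).1 ≤ x.1 ∧ x.2 ⊆ (st U x).2 ∧ ((st U x).2 \ x.2).Finite ∧
    (Ind x.1 x.2 → (∃ i, i ∉ x.2) → Ind (st U x).1 (st U x).2 ∧ Done U (st U x).1) := by
  have : ∀ (U : ℕ → Set P) (x : Filter P × Set T), ∃ y : Filter P × Set T,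
      y.1 ≤ x.1 ∧ x.2 ⊆ y.2 ∧ (y.2 \ x.2).Finite ∧
      (Ind x.1 x.2 → (∃ i, i ∉ x.2) → Ind y.1 y.2 ∧ Done U y.1) := by
    intro U x
    by_cases h : Ind x.1 x.2 ∧ ∃ i, i ∉ x.2
    · obtain ⟨i, hi⟩ := h.2
      obtain ⟨F', Q', h1, h2, h3, h4, h5⟩ := step x.1 x.2 h.1 i hi U
      exact ⟨(F', Q'), h1, h2, h3, fun _ _ => ⟨h4, h5⟩⟩
    · exact ⟨x, le_rfl, subset_rfl, by simp, fun h1 h2 => absurd ⟨h1, h2⟩ h⟩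
  choose st hst using this
  exact ⟨st, hst⟩

lemma mk_tasks : #(ℕ → Set P) = Cardinal.continuum := by
  have h1 : #P = ℵ₀ := by
    have : Infinite P :=
      Infinite.of_injective (fun n : ℕ => (⟨n, fun _ => ∅⟩ : P)) (fun a b h => (Sigma.mk.inj h).1)
    exact Cardinal.mk_eq_aleph0 P
  simp [Cardinal.mk_set]

lemma kunen (F₀ : Filter P) (Q₀ : Set T) (hF₀ : Ind F₀ Q₀)
    (hQ₀ : Cardinal.continuum ≤ #(Q₀ᶜ : Set T)) :
    ∃ u : Ultrafilter P, (u : Filter P) ≤ F₀ ∧ ∀ U : ℕ → Set P, (∀ n, U n ∈ u) →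
      ∃ V : T → Set P, (∀ α, V α ∈ u) ∧
        ∀ a : Finset T, ({p | ∀ α ∈ a, p ∈ V α} \ W U a.card).Finite := by
  classical
  obtain ⟨st, hst⟩ := step_fun
  let K := Cardinal.continuum.{0}.ord.ToType
  have hK : #K = #(ℕ → Set P) := by rw [mk_tasks]; exact Cardinal.mk_ord_toType _
  obtain ⟨task⟩ := Cardinal.eq.mp hK
  have : Nonempty K := ⟨task.symm (fun _ => ∅)⟩
  let pre : (τ : K) → ((σ : K) → σ < τ → Filter P × Set T) → Filter P × Set T := fun τ f =>
    (F₀ ⊓ ⨅ σ : Set.Iio τ, (f σ.1 σ.2).1, Q₀ ∪ ⋃ σ : Set.Iio τ, (f σ.1 σ.2).2)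
  let H : K → Filter P × Set T := (wellFounded_lt (α := K)).fix (fun τ f => st (task τ) (pre τ f))
  let p : K → Filter P × Set T := fun τ => pre τ (fun σ _ => H σ)
  have hH : ∀ τ, H τ = st (task τ) (p τ) := fun τ => WellFounded.fix_eq _ _ _
  have p1 : ∀ τ, (p τ).1 = F₀ ⊓ ⨅ σ : Set.Iio τ, (H σ.1).1 := fun _ => rfl
  have p2 : ∀ τ, (p τ).2 = Q₀ ∪ ⋃ σ : Set.Iio τ, (H σ.1).2 := fun _ => rfl
  have hle : ∀ τ, (H τ).1 ≤ (p τ).1 := fun τ => by rw [hH]; exact (hst _ _).1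
  have hsub : ∀ τ, (p τ).2 ⊆ (H τ).2 := fun τ => by rw [hH]; exact (hst _ _).2.1
  have hfin : ∀ τ, ((H τ).2 \ (p τ).2).Finite := fun τ => by
    rw [hH]; exact (hst (task τ) (p τ)).2.2.1
  have hanti : ∀ σ τ, σ ≤ τ → (H τ).1 ≤ (H σ).1 := by
    intro σ τ h
    rcases h.eq_or_lt with rfl | h
    · exact le_rfl
    · refine (hle τ).trans ?_
      rw [p1]
      exact inf_le_right.trans (iInf_le (fun σ : Set.Iio τ => (H σ.1).1) ⟨σ, h⟩)
  have hF0 : ∀ τ, (H τ).1 ≤ F₀ := fun τ => (hle τ).trans (by rw [p1]; exact inf_le_left)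
  have hQ1 : ∀ τ, (H τ).2 ⊆ Q₀ ∪ ⋃ σ : Set.Iic τ, ((H σ.1).2 \ (p σ.1).2) := by
    intro τ
    induction τ using (wellFounded_lt (α := K)).induction with
    | _ τ ih =>
      intro x hx
      by_cases hxp : x ∈ (p τ).2
      · rw [p2] at hxp
        rcases hxp with h | h
        · exact Or.inl h
        · obtain ⟨⟨σ, hσ⟩, h⟩ := Set.mem_iUnion.mp h
          rcases ih σ hσ h with h | h
          · exact Or.inl h
          · obtain ⟨⟨ρ, hρ⟩, h⟩ := Set.mem_iUnion.mp h
            exact Or.inr (Set.mem_iUnion.mpr ⟨⟨ρ, Set.mem_Iic.mpr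
              (le_trans (Set.mem_Iic.mp hρ) (le_of_lt hσ))⟩, h⟩)
      · exact Or.inr (Set.mem_iUnion.mpr ⟨⟨τ, le_refl τ⟩, hx, hxp⟩)
  have hQ2 : ∀ τ, ∃ i, i ∉ (p τ).2 := by
    intro τ
    by_contra hcon
    push Not at hcon
    have hs : (Q₀ᶜ : Set T) ⊆ ⋃ σ : Set.Iio τ, ((H σ.1).2 \ (p σ.1).2) := by
      intro x hx
      have h := hcon x
      rw [p2] at h
      rcases h with h | h
      · exact absurd h hx
      · obtain ⟨⟨σ, hσ⟩, h⟩ := Set.mem_iUnion.mp h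
        rcases hQ1 σ h with h | h
        · exact absurd h hx
        · obtain ⟨⟨ρ, hρ⟩, h⟩ := Set.mem_iUnion.mp h
          exact Set.mem_iUnion.mpr ⟨⟨ρ, Set.mem_Iio.mpr
            (lt_of_le_of_lt (Set.mem_Iic.mp hρ) (Set.mem_Iio.mp hσ))⟩, h⟩
    have h1 := hQ₀.trans (Cardinal.mk_le_mk_of_subset hs)
    have h2 := h1.trans (Cardinal.mk_iUnion_le _)
    have h3 : (⨆ σ : Set.Iio τ, #((H σ.1).2 \ (p σ.1).2 : Set T)) ≤ ℵ₀ := by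
      apply ciSup_le'
      intro σ
      exact (Cardinal.lt_aleph0_iff_set_finite.mpr (hfin σ.1)).le
    have h4 : #(Set.Iio τ) < Cardinal.continuum := by
      have := Cardinal.mk_Iio_lt τ (by simp [K])
      rwa [Cardinal.mk_ord_toType] at this
    have h5 := h2.trans (mul_le_mul' le_rfl h3)
    exact absurd h5 (not_le.mpr
      (Cardinal.mul_lt_of_lt Cardinal.aleph0_le_continuum h4 Cardinal.aleph0_lt_continuum))
  have hInd : ∀ τ, Ind (H τ).1 (H τ).2 ∧ Done (task τ) (H τ).1 := by
    intro τ
    induction τ using (wellFounded_lt (α := K)).induction with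
    | _ τ ih =>
      rw [hH]
      refine (hst (task τ) (p τ)).2.2.2 ?_ (hQ2 τ)
      intro s m a hs ha U hU
      rw [p1] at hU
      by_cases hne : Nonempty (Set.Iio τ)
      · have : (F₀ ⊓ ⨅ σ : Set.Iio τ, (H σ.1).1) = ⨅ σ : Set.Iio τ, (H σ.1).1 := by
          refine inf_eq_right.mpr ?_
          obtain ⟨σ⟩ := hne
          exact (iInf_le _ σ).trans (hF0 σ.1)
        rw [this, Filter.mem_iInf_of_directed] at hU
        · obtain ⟨σ, hU⟩ := hU
          refine (ih σ.1 σ.2).1 s m a ?_ ha U hU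
          intro i hi hq
          refine hs i hi ?_
          rw [p2]
          exact Or.inr (Set.mem_iUnion.mpr ⟨σ, hq⟩)
        · intro x y
          rcases le_total x y with h | h
          · exact ⟨y, hanti _ _ h, le_rfl⟩
          · exact ⟨x, le_rfl, hanti _ _ h⟩
      · rw [not_nonempty_iff] at hne
        rw [iInf_of_empty, inf_top_eq] at hU
        exact hF₀ s m a (fun i hi hq => hs i hi (by rw [p2]; exact Or.inl hq)) ha U hU
  have hdir : Directed (· ≥ ·) (fun τ => (H τ).1) := by
    intro x y
    rcases le_total x y with h | h
    · exact ⟨y, hanti _ _ h, le_rfl⟩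
    · exact ⟨x, le_rfl, hanti _ _ h⟩
  have : Nonempty P := ⟨⟨0, fun _ => ∅⟩⟩
  have hne : (⨅ τ, (H τ).1).NeBot := by
    refine Filter.iInf_neBot_of_directed hdir fun τ => ?_
    rw [← Filter.forall_mem_nonempty_iff_neBot]
    intro U hU
    exact ((hInd τ).1 ∅ (fun _ => 0) (fun _ => ∅) (by simp) (by simp) U hU).mono
      Set.inter_subset_left
  have hu : ∀ τ, ((Ultrafilter.of (⨅ τ, (H τ).1) : Ultrafilter P) : Filter P) ≤ (H τ).1 :=
    fun τ => (Ultrafilter.of_le _).trans (iInf_le _ τ)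
  refine ⟨Ultrafilter.of (⨅ τ, (H τ).1), ?_, ?_⟩
  · exact (hu (Classical.arbitrary K)).trans (hF0 _)
  · intro U hU
    have hd := ((hInd (task.symm U)).2).mono (hu _)
    rw [Equiv.apply_symm_apply] at hd
    rcases hd with ⟨n, hn⟩ | h
    · exfalso
      have : W U n ∈ Ultrafilter.of (⨅ τ, (H τ).1) := by
        have h1 : (⋂ k ∈ Set.Iio n, U k) ∈ ((Ultrafilter.of (⨅ τ, (H τ).1) : Ultrafilter P) :
            Filter P) := (Filter.biInter_mem (Set.finite_Iio n)).mpr fun k _ => hU k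
        refine Filter.mem_of_superset h1 ?_
        intro x hx k hk
        exact Set.mem_iInter₂.mp hx k hk
      exact (Ultrafilter.compl_mem_iff_notMem.mp hn) this
    · exact h

/-- Weak P-points (among nonprincipal ultrafilters). -/
def IsWeakP {X : Type} (u : Ultrafilter X) : Prop :=
  (u : Filter X) ≤ Filter.cofinite ∧
  ∀ C : Set (Ultrafilter X), C.Countable → (∀ c ∈ C, c ≠ u ∧ (c : Filter X) ≤ Filter.cofinite) →
    ∃ V ∈ u, ∀ c ∈ C, V ∉ c

lemma exists_mem_notMem {X : Type} {u c : Ultrafilter X} (h : c ≠ u) : ∃ E ∈ u, E ∉ c := by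
  by_contra hcon
  push Not at hcon
  exact h (Ultrafilter.coe_injective (Ultrafilter.unique u (fun s hs => hcon s hs)))

lemma weakP_of_ok (u : Ultrafilter P) (hu : (u : Filter P) ≤ Filter.cofinite)
    (h : ∀ U : ℕ → Set P, (∀ n, U n ∈ u) →
      ∃ V : T → Set P, (∀ α, V α ∈ u) ∧
        ∀ a : Finset T, ({p | ∀ α ∈ a, p ∈ V α} \ W U a.card).Finite) : IsWeakP u := by
  classical
  refine ⟨hu, fun C hC hCu => ?_⟩
  rcases C.eq_empty_or_nonempty with rfl | hne
  · exact ⟨Set.univ, Filter.univ_mem, by simp⟩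
  obtain ⟨c, rfl⟩ := hC.exists_eq_range hne
  have hE : ∀ k, ∃ E ∈ u, E ∉ c k := fun k => exists_mem_notMem (hCu _ ⟨k, rfl⟩).1
  choose E hE1 hE2 using hE
  obtain ⟨V, hV, hVa⟩ := h E hE1
  by_contra hcon
  push Not at hcon
  have hk : ∀ α, ∃ k, V α ∈ c k := by
    intro α
    obtain ⟨_, ⟨k, rfl⟩, hk⟩ := hcon (V α) (hV α)
    exact ⟨k, hk⟩
  choose k hk using hk
  have hunc : ∃ n, (k ⁻¹' {n}).Infinite := by
    by_contra hf
    push Not at hf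
    have : (Set.univ : Set T).Countable := by
      have : (Set.univ : Set T) = ⋃ n, k ⁻¹' {n} := by ext; simp
      rw [this]
      exact Set.countable_iUnion fun n => (Set.not_infinite.mp (by simpa using hf n)).countable
    have h1 : #T ≤ ℵ₀ := by
      have := Set.countable_univ_iff.mp this
      exact Cardinal.mk_le_aleph0
    have h2 : #T = Cardinal.continuum := by simp
    rw [h2] at h1
    exact absurd Cardinal.aleph0_lt_continuum (not_lt.mpr h1)
  obtain ⟨n, hn⟩ := hunc
  obtain ⟨a, ha, hcard⟩ := hn.exists_subset_card_eq (n + 1)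
  have h1 : {p | ∀ α ∈ a, p ∈ V α} ∈ c n := by
    have : (⋂ α ∈ a, V α) ∈ (c n : Filter P) := by
      rw [Filter.biInter_finset_mem]
      intro α hα
      have : k α = n := ha hα
      exact this ▸ hk α
    refine Filter.mem_of_superset this ?_
    intro x hx α hα
    exact Set.mem_iInter₂.mp hx α hα
  have h2 := (hCu (c n) ⟨n, rfl⟩).2 (hVa a).compl_mem_cofinite
  refine hE2 n (Filter.mem_of_superset (Filter.inter_mem h1 h2) ?_)
  rintro x ⟨hx1, hx2⟩
  by_contra hx
  refine hx2 ⟨hx1, fun hw => hx (hw n ?_)⟩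
  omega

/-- There are `2 ^ 𝔠` weak P-points on `P`. -/
lemma exists_weakP_family : ∃ u : Set T → Ultrafilter P, Function.Injective u ∧
    ∀ Y, IsWeakP (u Y) := by
  classical
  let cons : Bool → T → T := fun b i n => Nat.casesOn n b i
  have hcons : ∀ b, Function.Injective (cons b) := by
    intro b x y h
    funext n
    exact congrFun h (n + 1)
  let Q₀ : Set T := {i | i 0 = true}
  let e : Bool → T := fun b _ => b
  let cl : Set T → T → T := fun Y i => if i ∈ Y then e true else e false
  let F : Set T → Filter P := fun Y =>
    Filter.cofinite ⊓ ⨅ i : Q₀, Filter.principal (L i (cl Y i) 1)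
  have hQ : Cardinal.continuum ≤ #(Q₀ᶜ : Set T) := by
    have h2 : #T = Cardinal.continuum := by simp
    rw [← h2]
    refine Cardinal.mk_le_of_injective (f := fun i : T => (⟨cons false i, ?_⟩ : (Q₀ᶜ : Set T))) ?_
    · simp [Q₀, cons]
    · intro x y h
      exact hcons false (congrArg Subtype.val h)
  have hInd : ∀ Y, Ind (F Y) Q₀ := by
    intro Y s m a hs ha X hX
    obtain ⟨A, hA, B, hB, rfl⟩ := Filter.mem_inf_iff.mp hX
    obtain ⟨b, hb⟩ := Filter.mem_iInf_finite B |>.mp hB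
    rw [Filter.iInf_principal_finset, Filter.mem_principal] at hb
    have hinf := indep (s ∪ b.image Subtype.val) (fun i => if i ∈ s then m i else 1)
      (fun i => if i ∈ s then a i else {cl Y i}) (by
        intro i _
        by_cases h : i ∈ s
        · simpa [h] using ha i h
        · simp [h])
    have hfin : (Aᶜ).Finite := Filter.mem_cofinite.mp hA
    obtain ⟨p, hpG, hpA⟩ := (hinf.sdiff hfin).nonempty
    refine ⟨p, ⟨not_not.mp hpA, hb ?_⟩, ?_⟩
    · simp only [Set.mem_iInter]
      intro i hi
      have hns : i.1 ∉ s := fun h => hs _ h i.2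
      have := hpG i.1 (Finset.mem_union_right _ (Finset.mem_image_of_mem _ hi)) (cl Y i)
        (by simp [hns])
      simpa [hns] using this
    · intro i hi α hα
      have := hpG i (Finset.mem_union_left _ hi) α (by simpa [hi] using hα)
      simpa [hi] using this
  choose u hu1 hu2 using fun Y : Set T => kunen (F Y) Q₀ (hInd Y) hQ
  refine ⟨fun Y => u (cons true '' Y), ?_, fun Y =>
    weakP_of_ok _ ((hu1 _).trans inf_le_left) (hu2 _)⟩
  intro Y Z hYZ
  have key : ∀ Y i, L (cons true i) (cl (cons true '' Y) (cons true i)) 1 ∈ u (cons true '' Y) := by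
    intro Y i
    apply hu1
    exact Filter.mem_inf_of_right
      (Filter.mem_iInf_of_mem (⟨cons true i, rfl⟩ : Q₀) (Filter.mem_principal_self _))
  have hcl : ∀ Y i, cl (cons true '' Y) (cons true i) = if i ∈ Y then e true else e false := by
    intro Y i
    simp [cl, (hcons true).mem_set_image]
  ext i
  by_contra hne
  have h1 := key Y i
  have h2 := key Z i
  simp only at hYZ
  rw [← hYZ] at h2
  rw [hcl] at h1 h2
  have hb : L (cons true i) (e true) 1 ∩ L (cons true i) (e false) 1 ∈ u (cons true '' Y) := by
    by_cases hY : i ∈ Y <;> by_cases hZ : i ∈ Z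
    · exact absurd (iff_of_true hY hZ) hne
    · rw [if_pos hY] at h1
      rw [if_neg hZ] at h2
      exact Filter.inter_mem h1 h2
    · rw [if_neg hY] at h1
      rw [if_pos hZ] at h2
      exact Filter.inter_mem h2 h1
    · exact absurd (iff_of_false hY hZ) hne
  have hee : e true ≠ e false := fun h => by simpa [e] using congrFun h 0
  have hfin := linked (cons true i) {e true, e false} 1 (by rw [Finset.card_pair hee]; norm_num)
  have hco := (hu1 (cons true '' Y)).trans inf_le_left hfin.compl_mem_cofinite
  obtain ⟨x, hx1, hx2⟩ := (u (cons true '' Y)).nonempty_of_mem (Filter.inter_mem hb hco)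
  refine hx2 fun α hα => ?_
  rcases Finset.mem_insert.mp hα with rfl | h
  · exact hx1.1
  · rw [Finset.mem_singleton.mp h]
    exact hx1.2

lemma IsWeakP.map {X : Type} {f : P → X} (hf : Function.Injective f) {u : Ultrafilter P}
    (hu : IsWeakP u) : IsWeakP (u.map f) := by
  classical
  have hinj : Function.Injective (fun d : Ultrafilter P => d.map f) := by
    intro d d' h
    apply Ultrafilter.coe_injective
    apply Filter.map_injective hf
    exact congrArg (fun c : Ultrafilter X => (c : Filter X)) h
  refine ⟨?_, fun C hC hCu => ?_⟩
  · rw [Ultrafilter.coe_map]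
    exact (Filter.map_mono hu.1).trans hf.tendsto_cofinite
  · obtain ⟨V, hV, hVD⟩ := hu.2 ((fun d : Ultrafilter P => d.map f) ⁻¹' C)
      (hC.preimage_of_injOn hinj.injOn) (by
        intro d hd
        refine ⟨fun h => (hCu _ hd).1 (by rw [h]), ?_⟩
        have h1 := (hCu _ hd).2
        simp only [Ultrafilter.coe_map] at h1
        exact (Filter.le_comap_map.trans (Filter.comap_mono h1)).trans
          (Filter.comap_cofinite_le f))
    refine ⟨f '' V, ?_, ?_⟩
    · rw [Ultrafilter.mem_map, Set.preimage_image_eq _ hf]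
      exact hV
    · intro c hc hVc
      have hr : Set.range f ∈ c := Filter.mem_of_superset hVc (Set.image_subset_range _ _)
      have hmap : (c.comap hf hr).map f = c := by
        apply Ultrafilter.coe_injective
        simp only [Ultrafilter.coe_map, Ultrafilter.coe_comap]
        exact Filter.map_comap_of_mem hr
      refine hVD (c.comap hf hr) (by rw [Set.mem_preimage, hmap]; exact hc) ?_
      rw [← hmap, Ultrafilter.mem_map, Set.preimage_image_eq _ hf] at hVc
      exact hVc

lemma exists_inj_choice {ι α : Type} (W : ι → Set α) (h : ∀ i, #ι ≤ #(W i)) :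
    ∃ f : ι → α, Function.Injective f ∧ ∀ i, f i ∈ W i := by
  classical
  let K := (#ι).ord.ToType
  have hK : #K = #ι := Cardinal.mk_ord_toType _
  obtain ⟨e⟩ := Cardinal.eq.mp hK
  have hlt : ∀ τ : K, #(Set.Iio τ) < #ι := fun τ => by
    have := Cardinal.mk_Iio_lt τ (by simp [K])
    rwa [hK] at this
  have hex : ∀ (τ : K) (g : (σ : K) → σ < τ → α), ∃ x ∈ W (e τ), ∀ σ hσ, g σ hσ ≠ x := by
    intro τ g
    by_contra hcon
    push Not at hcon
    have hsub : W (e τ) ⊆ Set.range (fun σ : Set.Iio τ => g σ.1 σ.2) := by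
      intro x hx
      obtain ⟨σ, hσ, h⟩ := hcon x hx
      exact ⟨⟨σ, hσ⟩, h⟩
    exact absurd (((h (e τ)).trans (Cardinal.mk_le_mk_of_subset hsub)).trans
      Cardinal.mk_range_le) (not_le.mpr (hlt τ))
  choose F hF1 hF2 using hex
  let f : K → α := (wellFounded_lt (α := K)).fix F
  have hf : ∀ τ, f τ = F τ (fun σ _ => f σ) := fun τ => WellFounded.fix_eq _ _ _
  have hne : ∀ σ τ, σ < τ → f σ ≠ f τ := by
    intro σ τ hστ
    rw [hf τ]
    exact hF2 τ (fun σ _ => f σ) σ hστ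
  refine ⟨fun i => f (e.symm i), ?_, fun i => ?_⟩
  · intro i j hij
    apply e.symm.injective
    rcases lt_trichotomy (e.symm i) (e.symm j) with h | h | h
    · exact absurd hij (hne _ _ h)
    · exact h
    · exact absurd hij.symm (hne _ _ h)
  · have := hF1 (e.symm i) (fun σ _ => f σ)
    rw [← hf, Equiv.apply_symm_apply] at this
    exact this

/-- Many weak P-points containing a given infinite set. -/
lemma many_weakP {X : Type} (A : Set X) (hA : A.Infinite) :
    2 ^ Cardinal.continuum ≤ #{u : Ultrafilter X | IsWeakP u ∧ A ∈ u} := by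
  obtain ⟨w, hw, hwP⟩ := exists_weakP_family
  obtain ⟨g, hg⟩ := exists_injective_nat P
  have : Infinite A := hA.to_subtype
  let f : P → X := fun p => (Infinite.natEmbedding A (g p)).1
  have hf : Function.Injective f := fun x y h =>
    hg ((Infinite.natEmbedding A).injective (Subtype.val_injective h))
  have hT : #(Set T) = 2 ^ Cardinal.continuum := by
    rw [Cardinal.mk_set]
    simp
  rw [← hT]
  refine Cardinal.mk_le_of_injective
    (f := fun Y => (⟨(w Y).map f, (hwP Y).map hf, ?_⟩ : {u : Ultrafilter X | IsWeakP u ∧ A ∈ u})) ?_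
  · rw [Ultrafilter.mem_map]
    refine Filter.mem_of_superset Filter.univ_mem fun p _ => ?_
    exact (Infinite.natEmbedding A (g p)).2
  · intro Y Z h
    apply hw
    apply Ultrafilter.coe_injective
    apply Filter.map_injective hf
    exact congrArg (fun c : {u : Ultrafilter X | IsWeakP u ∧ A ∈ u} => (c.1 : Filter X)) h

/-- Countable families of distinct weak P-points are disjointly representable. -/
lemma disjoint_rep {X J : Type} [Countable J] (u : J → Ultrafilter X)
    (hu : Function.Injective u) (hP : ∀ j, IsWeakP (u j)) :
    ∃ D : J → Set X, (∀ j, D j ∈ u j) ∧ ∀ j j' x, x ∈ D j → x ∈ D j' → j = j' := by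
  classical
  have h : ∀ j, ∃ E ∈ u j, ∀ j', j' ≠ j → E ∉ u j' := by
    intro j
    obtain ⟨V, hV, hV'⟩ := (hP j).2 (u '' {j' | j' ≠ j}) ((Set.to_countable _).image u) (by
      rintro _ ⟨j', hj', rfl⟩
      exact ⟨fun h => hj' (hu h), (hP j').1⟩)
    exact ⟨V, hV, fun j' hj' => hV' _ ⟨j', hj', rfl⟩⟩
  choose E hE1 hE2 using h
  obtain ⟨g, hg⟩ := exists_injective_nat J
  refine ⟨fun j => E j ∩ ⋂ j' ∈ {j' | g j' < g j}, (E j')ᶜ, fun j => ?_, ?_⟩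
  · refine Filter.inter_mem (hE1 j) ((Filter.biInter_mem ?_).mpr ?_)
    · exact (Set.finite_Iio (g j)).preimage hg.injOn
    · intro j' hj'
      refine Ultrafilter.compl_mem_iff_notMem.mpr (hE2 j' j ?_)
      rintro rfl
      simp at hj'
  · intro j j' x hx hx'
    apply hg
    by_contra hne
    rcases lt_or_gt_of_ne hne with h | h
    · exact Set.mem_iInter₂.mp hx'.2 j h hx.1
    · exact Set.mem_iInter₂.mp hx.2 j' h hx'.1

/-- The topology given by assigning two filters to each point. -/
def topo {X : Type} (u : X × Bool → Ultrafilter X) : TopologicalSpace X where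
  IsOpen U := ∀ x ∈ U, ∀ b, U ∈ u (x, b)
  isOpen_univ := fun _ _ _ => Filter.univ_mem
  isOpen_inter := fun _ _ hs ht x hx b => Filter.inter_mem (hs x hx.1 b) (ht x hx.2 b)
  isOpen_sUnion := fun _ hS x ⟨t, ht, hx⟩ b =>
    Filter.mem_of_superset (hS t ht x hx b) (Set.subset_sUnion_of_mem ht)

lemma hull {X : Type} (A : X × Bool → Set X) (hA : ∀ j, (A j).Countable) (S₀ : Set X)
    (h0 : S₀.Countable) : ∃ S : Set X, S₀ ⊆ S ∧ S.Countable ∧ ∀ x ∈ S, ∀ b, A (x, b) ⊆ S := by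
  let S : ℕ → Set X := fun n => Nat.rec S₀ (fun _ s => ⋃ x ∈ s, ⋃ b, A (x, b)) n
  have hc : ∀ n, (S n).Countable := by
    intro n
    induction n with
    | zero => exact h0
    | succ n ih => exact ih.biUnion fun x _ => Set.countable_iUnion fun b => hA _
  refine ⟨⋃ n, S n, Set.subset_iUnion S 0, Set.countable_iUnion hc, ?_⟩
  intro x hx b y hy
  obtain ⟨n, hn⟩ := Set.mem_iUnion.mp hx
  refine Set.mem_iUnion.mpr ⟨n + 1, ?_⟩
  change y ∈ ⋃ x ∈ S n, ⋃ b, A (x, b)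
  simp only [Set.mem_iUnion]
  exact ⟨x, hn, b, hy⟩

lemma separate {X : Type} (A : X × Bool → Set X) (hA : ∀ j, (A j).Countable)
    (u : X × Bool → Ultrafilter X) (hu : Function.Injective u) (hP : ∀ j, IsWeakP (u j))
    (hAu : ∀ j, A j ∈ u j) (x y : X) : ∃ N M : Set X, x ∈ N ∧ y ∈ M ∧ N.Countable ∧
      (∀ z ∈ N, ∀ b, N ∈ u (z, b)) ∧ (∀ z ∈ M, ∀ b, M ∈ u (z, b)) ∧
      (x ≠ y → Disjoint N M) := by
  classical
  obtain ⟨S, hS0, hSc, hSA⟩ := hull A hA {x, y} (Set.toFinite _).countable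
  have : Countable S := hSc.to_subtype
  obtain ⟨D, hD, hDd⟩ := disjoint_rep (J := S × Bool) (fun j => u (j.1.1, j.2)) (by
    rintro ⟨⟨a, ha⟩, b⟩ ⟨⟨a', ha'⟩, b'⟩ h
    have := hu h
    simp only [Prod.mk.injEq] at this
    obtain ⟨rfl, rfl⟩ := this
    rfl) (fun j => hP _)
  let R : X → X → Prop := fun z w =>
    ∃ (h : z ∈ S) (b : Bool), w ∈ D (⟨z, h⟩, b) ∧ w ∈ A (z, b) ∧ w ≠ x ∧ w ≠ y
  have hRS : ∀ {z w}, R z w → w ∈ S := fun ⟨h, b, _, hw, _⟩ => hSA _ h b hw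
  have hRdet : ∀ {z z' w}, R z w → R z' w → z = z' := by
    rintro z z' w ⟨h, b, hw, _⟩ ⟨h', b', hw', _⟩
    have := hDd _ _ _ hw hw'
    exact congrArg (fun j : S × Bool => j.1.1) this
  have hstarS : ∀ t ∈ S, ∀ w, Relation.ReflTransGen R t w → w ∈ S := by
    intro t ht w h
    induction h with
    | refl => exact ht
    | tail _ h _ => exact hRS h
  have hopen : ∀ t ∈ S, ∀ z ∈ {w | Relation.ReflTransGen R t w}, ∀ b,
      {w | Relation.ReflTransGen R t w} ∈ u (z, b) := by
    intro t ht z hz b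
    have hzS := hstarS t ht z hz
    have h1 := hD (⟨z, hzS⟩, b)
    have h2 := hAu (z, b)
    have h3 : ({x, y} : Set X)ᶜ ∈ u (z, b) :=
      (hP (z, b)).1 (Set.toFinite ({x, y} : Set X)).compl_mem_cofinite
    refine Filter.mem_of_superset (Filter.inter_mem (Filter.inter_mem h1 h2) h3) ?_
    rintro w ⟨⟨hw1, hw2⟩, hw3⟩
    refine Relation.ReflTransGen.tail hz ⟨hzS, b, hw1, hw2, ?_, ?_⟩
    · rintro rfl; exact hw3 (Or.inl rfl)
    · rintro rfl; exact hw3 (Or.inr rfl)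
  have hxS : x ∈ S := hS0 (Or.inl rfl)
  have hyS : y ∈ S := hS0 (Or.inr rfl)
  refine ⟨{w | Relation.ReflTransGen R x w}, {w | Relation.ReflTransGen R y w}, .refl, .refl,
    hSc.mono (hstarS x hxS), hopen x hxS, hopen y hyS, fun hxy => ?_⟩
  rw [Set.disjoint_left]
  intro w hw
  induction hw with
  | refl =>
    intro h
    rcases Relation.ReflTransGen.cases_tail h with h | ⟨z, _, h⟩
    · exact hxy h
    · obtain ⟨_, _, _, _, h, _⟩ := h
      exact h rfl
  | tail _ hzw ih =>
    intro h
    rcases Relation.ReflTransGen.cases_tail h with h | ⟨z', hz', h⟩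
    · obtain ⟨_, _, _, _, _, h'⟩ := hzw
      exact h' h
    · exact ih (by rw [hRdet hzw h]; exact hz')

lemma sau_main (κ : Cardinal.{0}) (h1 : ℵ₀ ≤ κ) (h2 : κ ^ ℵ₀ = κ)
    (h3 : κ ≤ 2 ^ Cardinal.continuum) :
    ∃ (X : Type) (_ : TopologicalSpace X),
      IsSAU X ∧ (∀ x : X, ∃ U ∈ nhds x, U.Countable) ∧ #X = κ := by
  classical
  let X : Type := κ.out
  have hX : #X = κ := Cardinal.mk_out κ
  have : Infinite X := Cardinal.infinite_iff.mpr (by rw [hX]; exact h1)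
  let C : Type := {A : Set X // A.Countable ∧ A.Infinite}
  have hCex : ∀ F : Set X, F.Infinite → ∃ A : C, A.1 ⊆ F := by
    intro F hF
    have : Infinite F := hF.to_subtype
    refine ⟨⟨Set.range (fun n => (Infinite.natEmbedding F n).1), Set.countable_range _,
      Set.infinite_range_of_injective
        (Subtype.val_injective.comp (Infinite.natEmbedding F).injective)⟩, ?_⟩
    rintro _ ⟨n, rfl⟩
    exact (Infinite.natEmbedding F n).2
  obtain ⟨A₀, _⟩ := hCex Set.univ Set.infinite_univ
  have : Nonempty (C × C) := ⟨(A₀, A₀)⟩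
  have hC : #C ≤ κ := by
    have hs : ∀ A : C, ∃ f : ℕ → X, A.1 = Set.range f := fun A =>
      A.2.1.exists_eq_range A.2.2.nonempty
    choose f hf using hs
    have : #C ≤ #(ℕ → X) := Cardinal.mk_le_of_injective (f := f) (by
      intro A B h
      apply Subtype.ext
      rw [hf A, hf B, h])
    refine this.trans (le_of_eq ?_)
    rw [← h2]
    simp [hX]
  have hCC : #(C × C) ≤ #X := by
    rw [hX, Cardinal.mk_prod, Cardinal.lift_id]
    exact (mul_le_mul' hC hC).trans (Cardinal.mul_eq_self h1).le
  obtain ⟨⟨i, hi⟩⟩ := Cardinal.le_def _ _ |>.mp hCC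
  let e : X → C × C := Function.invFun i
  have he : Function.Surjective e := Function.invFun_surjective hi
  let A : X × Bool → C := fun j => if j.2 then (e j.1).1 else (e j.1).2
  obtain ⟨u, hu, huW⟩ := exists_inj_choice
    (fun j : X × Bool => {v : Ultrafilter X | IsWeakP v ∧ (A j).1 ∈ v}) (by
      intro j
      refine le_trans ?_ ((h3.trans (many_weakP (A j).1 (A j).2.2)))
      rw [Cardinal.mk_prod, Cardinal.lift_id, Cardinal.lift_id, hX]
      refine (Cardinal.mul_le_max_of_aleph0_le_left h1).trans (max_le le_rfl ?_)
      exact Cardinal.mk_le_aleph0.trans h1)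
  have hsep := separate (fun j => (A j).1) (fun j => (A j).2.1) u hu (fun j => (huW j).1)
    (fun j => (huW j).2)
  letI : TopologicalSpace X := topo u
  have hop : ∀ U : Set X, IsOpen U ↔ ∀ x ∈ U, ∀ b, U ∈ u (x, b) := fun _ => Iff.rfl
  have hiso : ∀ x : X, ¬ IsOpen ({x} : Set X) := by
    intro x h
    have h1 := (hop _).mp h x rfl true
    have h2 := (huW (x, true)).1.1 (Set.finite_singleton x).compl_mem_cofinite
    exact Ultrafilter.compl_mem_iff_notMem.mp h2 h1
  have hlim : ∀ F : Set X, IsClosed F → ∀ x b, (A (x, b)).1 ⊆ F → x ∈ F := by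
    intro F hF x b hAF
    by_contra hx
    have h1 := (hop _).mp hF.isOpen_compl x hx b
    exact Ultrafilter.compl_mem_iff_notMem.mp h1
      (Filter.mem_of_superset (huW (x, b)).2 hAF)
  refine ⟨X, topo u, ⟨⟨?_⟩, ?_, ?_⟩, ?_, hX⟩
  · intro x y hxy
    obtain ⟨N, M, hx, hy, _, hN, hM, hd⟩ := hsep x y
    exact ⟨N, M, (hop N).mpr hN, (hop M).mpr hM, hx, hy, hd hxy⟩
  · obtain ⟨x, y, hxy⟩ := exists_pair_ne X
    exact ⟨x, y, hxy, hiso x, hiso y⟩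
  · intro F G hF hG hFi hGi
    obtain ⟨a, ha⟩ := hCex F hFi
    obtain ⟨b, hb⟩ := hCex G hGi
    obtain ⟨x, hx⟩ := he (a, b)
    refine ⟨x, hlim F hF x true ?_, hlim G hG x false ?_⟩
    · simpa [A, hx] using ha
    · simpa [A, hx] using hb
  · intro x
    obtain ⟨N, M, hx, hy, hc, hN, hM, hd⟩ := hsep x x
    exact ⟨N, ((hop N).mpr hN).mem_nhds hx, hc⟩

end KunenWP

/-- if `ω ≤ κ = κ^ω ≤ 2^𝔠`, then there is a locally countable SAU
space of cardinality `κ` (in particular, in ZFC there is one of cardinality `2^𝔠`). -/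
theorem stmt15 (κ : Cardinal.{0}) (h1 : ℵ₀ ≤ κ) (h2 : κ ^ ℵ₀ = κ)
    (h3 : κ ≤ 2 ^ Cardinal.continuum) :
    ∃ (X : Type) (_ : TopologicalSpace X),
      IsSAU X ∧ (∀ x : X, ∃ U ∈ nhds x, U.Countable) ∧ #X = κ := by
  exact KunenWP.sau_main κ h1 h2 h3
end

section
/- For 𝔠 ≤ κ ≤ 2^𝔠, there exists a locally countable SAU space of cardinality κ if and only if κ^ω = κ. -/
open Cardinal Set

namespace SAUProof

/-! ### Forward direction -/

/-- Every infinite set accumulates somewhere. -/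
lemma exists_acc {X : Type} [TopologicalSpace X] (hX : IsSAU X) (U : X → Set X)
    (hU : ∀ x, U x ∈ nhds x) (A : Set X) (hA : A.Infinite) : ∃ x, (A ∩ U x).Infinite := by
  obtain ⟨hT, -, hI⟩ := hX
  by_contra hcon
  push Not at hcon
  have hcl : ∀ B ⊆ A, IsClosed B := by
    intro B hB
    rw [← isOpen_compl_iff, isOpen_iff_mem_nhds]
    intro x hx
    have hfin : (B ∩ U x).Finite := (hcon x).subset (by gcongr)
    have h1 : (B ∩ U x)ᶜ ∈ nhds x :=
      hfin.isClosed.isOpen_compl.mem_nhds (fun h => hx h.1)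
    filter_upwards [h1, hU x] with y hy1 hy2 hy3
    exact hy1 ⟨hy3, hy2⟩
  let f := hA.natEmbedding
  let g : ℕ → X := fun n => f n
  have hg : Function.Injective g := fun a b h => f.injective (Subtype.ext h)
  have hgA : ∀ n, g n ∈ A := fun n => (f n).2
  have i1 : (range fun n => g (2 * n)).Infinite :=
    infinite_range_of_injective (fun a b h => by have := hg h; omega)
  have i2 : (range fun n => g (2 * n + 1)).Infinite :=
    infinite_range_of_injective (fun a b h => by have := hg h; omega)
  obtain ⟨z, ⟨a, ha⟩, ⟨b, hb⟩⟩ := hI _ _ (hcl _ (by rintro _ ⟨n, rfl⟩; exact hgA _))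
    (hcl _ (by rintro _ ⟨n, rfl⟩; exact hgA _)) i1 i2
  have := hg (ha.trans hb.symm)
  omega

lemma forward (κ : Cardinal.{0}) (h1 : Cardinal.continuum ≤ κ) (X : Type) [TopologicalSpace X]
    (hX : IsSAU X) (hc : ∀ x : X, ∃ U ∈ nhds x, U.Countable) (hκ : #X = κ) : κ ^ ℵ₀ = κ := by
  choose U hU hUc using hc
  have hinf : Infinite X := by
    rw [Cardinal.infinite_iff, hκ]; exact aleph0_le_continuum.trans h1
  have hj : ∀ x, ∃ j : X → ℕ, InjOn j (U x) := fun x => (countable_iff_exists_injOn.1 (hUc x))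
  choose j hj using hj
  obtain ⟨e⟩ : Nonempty (List X ↪ X) := by
    rw [← Cardinal.le_def, Cardinal.mk_list_eq_mk]
  let b : (ℕ → X) → ℕ → X := fun f n => e (List.ofFn fun i : Fin n => f i)
  have hb : ∀ f g n m, b f n = b g m → n = m ∧ ∀ k < n, f k = g k := by
    intro f g n m h
    have h' := e.injective h
    have hl := congrArg List.length h'
    simp only [List.length_ofFn] at hl
    subst hl
    refine ⟨rfl, fun k hk => ?_⟩
    have := List.ofFn_injective h'
    exact congrFun this ⟨k, hk⟩
  have hacc : ∀ f, ∃ x, (range (b f) ∩ U x).Infinite := fun f =>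
    exists_acc hX U hU _ (infinite_range_of_injective fun n m h => (hb f f n m h).1)
  choose x hx using hacc
  have hinj : Function.Injective
      (fun f : ℕ → X => (x f, j (x f) '' (range (b f) ∩ U (x f)))) := by
    intro f g h
    simp only [Prod.mk.injEq] at h
    obtain ⟨h1, h2⟩ := h
    have hxf := hx f
    rw [← h1] at h2
    have hsub : range (b f) ∩ U (x f) = range (b g) ∩ U (x f) :=
      ((hj (x f)).image_eq_image_iff inter_subset_right inter_subset_right).1 h2
    funext k
    by_contra hk
    apply hxf
    refine ((finite_Iic k).image (b f)).subset ?_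
    rintro y hy
    have hy' := hy
    rw [hsub] at hy'
    obtain ⟨⟨n, rfl⟩, -⟩ := hy
    obtain ⟨⟨m, hm⟩, -⟩ := hy'
    refine ⟨n, ?_, rfl⟩
    by_contra hn
    exact hk ((hb f g n m hm.symm).2 k (by simpa using hn))
  have hle := Cardinal.mk_le_of_injective hinj
  have h3 : #(X × Set ℕ) = κ := by
    rw [Cardinal.mk_prod, Cardinal.lift_id, Cardinal.lift_id, hκ, Cardinal.mk_set, Cardinal.mk_nat,
      Cardinal.two_power_aleph0]
    exact Cardinal.mul_eq_left (aleph0_le_continuum.trans h1) h1 Cardinal.continuum_ne_zero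
  have h4 : #(ℕ → X) = κ ^ ℵ₀ := by simp [hκ]
  rw [h3, h4] at hle
  exact le_antisymm hle (Cardinal.self_le_power κ Cardinal.one_le_aleph0)

/-! ### The matrix of sets -/

/-- Total size of the first `s` blocks. -/
def W : ℕ → ℕ
  | 0 => 0
  | s + 1 => W s + (2 * s * W s + 1)

/-- Size of block `s`. -/
def w (s : ℕ) : ℕ := 2 * s * W s + 1

lemma sum_w (s : ℕ) : ∑ t : Fin s, w t = W s := by
  induction s with
  | zero => rfl
  | succ n ih => rw [Fin.sum_univ_castSucc]; simp only [Fin.val_castSucc, ih, Fin.val_last]; rfl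

/-- The underlying countable set, split in blocks. -/
abbrev P := Σ s : ℕ, Fin (w s)

/-- The matrix entry for colouring `g` of blocks and sequence of injections `σ`. -/
def A (σ : ℕ → P × Bool → ℕ) (g : ℕ → ℕ) (n : ℕ) : Set P :=
  {p | g p.1 = n ∧ ∀ q : P, q.1 < p.1 → g q.1 ≠ n → ∀ b b', σ n (p, b) ≠ σ (g q.1) (q, b')}

lemma A_disj (σ : ℕ → P × Bool → ℕ) (g : ℕ → ℕ) {n m : ℕ} (hnm : n ≠ m) {p q : P}
    (hp : p ∈ A σ g n) (hq : q ∈ A σ g m) (b b' : Bool) : σ n (p, b) ≠ σ m (q, b') := by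
  obtain ⟨hp1, hp2⟩ := hp
  obtain ⟨hq1, hq2⟩ := hq
  rcases lt_trichotomy p.1 q.1 with h | h | h
  · have := hq2 p h (by rw [hp1]; exact hnm) b' b
    rw [hp1] at this
    exact this.symm
  · exact absurd (by rw [← hp1, ← hq1, h]) hnm
  · have := hp2 q h (by rw [hq1]; exact hnm.symm) b b'
    rwa [hq1] at this

open Classical in
lemma bad_card (σ : ℕ → P × Bool → ℕ) (hσ : ∀ n, Function.Injective (σ n)) (g : ℕ → ℕ) (s : ℕ) :
    (Finset.univ.filter fun j : Fin (w s) => (⟨s, j⟩ : P) ∉ A σ g (g s)).card ≤ W s * 2 := by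
  have hex : ∀ j : Fin (w s), (⟨s, j⟩ : P) ∉ A σ g (g s) →
      ∃ z : (Σ t : Fin s, Fin (w t)) × Bool, ∃ b,
        σ (g s) (⟨s, j⟩, b) = σ (g z.1.1) (⟨z.1.1, z.1.2⟩, z.2) := by
    intro j hj
    simp only [A, mem_ofPred_eq, true_and] at hj
    push Not at hj
    obtain ⟨q, hq, -, b, b', h⟩ := hj
    exact ⟨(⟨⟨q.1, hq⟩, q.2⟩, b'), b, h⟩
  have hcard : Fintype.card ((Σ t : Fin s, Fin (w t)) × Bool) = W s * 2 := by
    simp [Fintype.card_sigma, sum_w]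
  rw [← hcard, ← Fintype.card_subtype]
  choose z b hz using fun j : {j : Fin (w s) // (⟨s, j⟩ : P) ∉ A σ g (g s)} => hex j.1 j.2
  refine Fintype.card_le_of_injective z ?_
  intro j j' h
  have h1 := hz j
  rw [h, ← hz j'] at h1
  have h2 := hσ _ h1
  simp only [Prod.mk.injEq, Sigma.mk.injEq, heq_eq_eq, true_and] at h2
  exact Subtype.ext h2.1

open Classical in
/-- Countable dense subset of `ℕ ^ I`, every requirement is met infinitely often. -/
lemma dense_col {I : Type} (φ : I → Set ℕ) (hφ : Function.Injective φ) :
    ∃ r : ℕ → I → ℕ, ∀ (J : Finset I) (v : I → ℕ) (N : ℕ), ∃ s ≥ N, ∀ i ∈ J, r s i = v i := by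
  let tr : ℕ → I → Finset ℕ := fun k i => (Finset.range k).filter (· ∈ φ i)
  obtain ⟨e, he⟩ := exists_surjective_nat (ℕ × (Finset ℕ →₀ ℕ))
  refine ⟨fun s i => (e s.unpair.1).2 (tr (e s.unpair.1).1 i), ?_⟩
  intro J v N
  have hk : ∃ k, InjOn (tr k) (J : Set I) := by
    have hd : ∀ z : I × I, ∃ n, z.1 ≠ z.2 → ¬ (n ∈ φ z.1 ↔ n ∈ φ z.2) := by
      intro z
      by_cases h : z.1 = z.2
      · exact ⟨0, fun h' => absurd h h'⟩
      · by_contra hcon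
        push Not at hcon
        apply h
        apply hφ
        ext n
        exact (hcon n).2
    choose d hd using hd
    refine ⟨(J ×ˢ J).sup d + 1, ?_⟩
    intro i hi i' hi' h
    by_contra hne
    apply hd (i, i') hne
    have hlt : d (i, i') < (J ×ˢ J).sup d + 1 :=
      Nat.lt_succ_of_le (Finset.le_sup (f := d) (Finset.mem_product.2 ⟨hi, hi'⟩))
    have := Finset.ext_iff.1 h (d (i, i'))
    simpa [tr, hlt] using this
  obtain ⟨k, hk⟩ := hk
  let l : Finset ℕ →₀ ℕ := Finsupp.onFinset (J.image (tr k))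
    (fun t => if h : ∃ i ∈ J, tr k i = t then v h.choose else 0) (by
      intro t ht
      by_cases h : ∃ i ∈ J, tr k i = t
      · simpa using h
      · simp [h] at ht)
  obtain ⟨a, ha⟩ := he (k, l)
  refine ⟨Nat.pair a N, Nat.right_le_pair a N, ?_⟩
  intro i hi
  simp only [Nat.unpair_pair, ha]
  have hex : ∃ i' ∈ J, tr k i' = tr k i := ⟨i, hi, rfl⟩
  have hl : l (tr k i) = v hex.choose := by
    simp only [l, Finsupp.onFinset_apply]
    rw [dif_pos hex]
  rw [hl, hk hex.choose_spec.1 hi hex.choose_spec.2]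

/-- Index set. -/
abbrev Idx := {σ : ℕ → P × Bool → ℕ // ∀ n, Function.Injective (σ n)} ×
  (ℕ → Set ℕ) × (ℕ → Set ℕ)

lemma idx_inj : ∃ φ : Idx → Set ℕ, Function.Injective φ := by
  have h : #Idx ≤ #(Set ℕ) := by
    have e1 : #(ℕ → P × Bool → ℕ) = 𝔠 := by
      have : #(P × Bool) = ℵ₀ := by
        have : Infinite P := Infinite.of_injective (fun s : ℕ => (⟨s, ⟨0, Nat.succ_pos _⟩⟩ : P))
          (fun a b h => congrArg Sigma.fst h)
        exact Cardinal.mk_eq_aleph0 _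
      rw [← Cardinal.power_def, ← Cardinal.power_def, this]
      simp
    have e2 : #(ℕ → Set ℕ) = 𝔠 := by
      rw [← Cardinal.power_def]; simp
    have e3 : #(Set ℕ) = 𝔠 := by simp
    rw [Cardinal.mk_prod, Cardinal.mk_prod, e2, e3]
    simp only [Cardinal.lift_id, Cardinal.continuum_mul_self]
    calc _ ≤ 𝔠 * 𝔠 := by gcongr; rw [← e1]; exact Cardinal.mk_subtype_le _
      _ = 𝔠 := Cardinal.continuum_mul_self
  obtain ⟨f⟩ := h
  exact ⟨f, f.injective⟩

open Classical in
/-- The Engelking–Karłowicz functions. -/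
noncomputable def ek (γ : Set (Set ℕ)) (i : Idx) : ℕ :=
  if h : ∃ n, i.2.2 n = {k | i.2.1 k ∈ γ} then h.choose else 0

lemma ek_spec (g : ℕ → Set (Set ℕ)) (hg : Function.Injective g) (σ) :
    ∃ i : Idx, i.1 = σ ∧ ∀ n, ek (g n) i = n := by
  have hd : ∀ z : ℕ × ℕ, ∃ x, z.1 ≠ z.2 → ¬ (x ∈ g z.1 ↔ x ∈ g z.2) := by
    intro z
    by_cases h : z.1 = z.2
    · exact ⟨∅, fun h' => absurd h h'⟩
    · by_contra hcon
      push Not at hcon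
      apply h
      apply hg
      ext n
      exact (hcon n).2
  choose d hd using hd
  let d' : ℕ → Set ℕ := fun k => d k.unpair
  refine ⟨(σ, d', fun n => {k | d' k ∈ g n}), rfl, ?_⟩
  intro n
  have hex : ∃ m, {k | d' k ∈ g m} = {k | d' k ∈ g n} := ⟨n, rfl⟩
  have : ek (g n) (σ, d', fun n => {k | d' k ∈ g n}) = hex.choose := by
    unfold ek
    exact dif_pos hex
  rw [this]
  by_contra hne
  apply hd (hex.choose, n) hne
  have h := Set.ext_iff.1 hex.choose_spec (Nat.pair hex.choose n)
  simpa [d'] using h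

open Classical in
/-- The filters. -/
lemma exists_filters : ∃ F : Set (Set ℕ) → Filter P,
    (∀ γ, (F γ).NeBot) ∧ (∀ γ, F γ ≤ Filter.cofinite) ∧
    ∀ (g : ℕ → Set (Set ℕ)), Function.Injective g → ∀ σ : ℕ → P × Bool → ℕ,
      (∀ n, Function.Injective (σ n)) → ∃ T : ℕ → Set P, (∀ n, T n ∈ F (g n)) ∧
        ∀ n m, n ≠ m → ∀ p ∈ T n, ∀ q ∈ T m, ∀ b b', σ n (p, b) ≠ σ m (q, b') := by
  obtain ⟨φ, hφ⟩ := idx_inj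
  obtain ⟨r, hr⟩ := dense_col φ hφ
  let M : Idx → ℕ → Set P := fun i n => A i.1.1 (fun s => r s i) n
  have hM : ∀ (J : Finset Idx) (v : Idx → ℕ) (N : ℕ),
      ∃ p : P, N ≤ p.1 ∧ ∀ i ∈ J, p ∈ M i (v i) := by
    intro J v N
    obtain ⟨s, hs, hv⟩ := hr J v (max N J.card)
    let bad : Idx → Finset (Fin (w s)) := fun i =>
      Finset.univ.filter fun j : Fin (w s) => (⟨s, j⟩ : P) ∉ A i.1.1 (fun s => r s i) (r s i)
    have hcard : (J.biUnion bad).card < (Finset.univ : Finset (Fin (w s))).card := by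
      calc (J.biUnion bad).card ≤ J.card * (W s * 2) :=
            Finset.card_biUnion_le_card_mul _ _ _ fun i _ => bad_card i.1.1 i.1.2 _ s
        _ ≤ s * (W s * 2) := Nat.mul_le_mul_right _ ((le_max_right _ _).trans hs)
        _ < w s := by unfold w; nlinarith
        _ = _ := by simp
    obtain ⟨j, -, hj⟩ := Finset.exists_mem_notMem_of_card_lt_card hcard
    refine ⟨⟨s, j⟩, (le_max_left _ _).trans hs, fun i hi => ?_⟩
    by_contra hcon
    apply hj
    rw [Finset.mem_biUnion]
    refine ⟨i, hi, ?_⟩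
    simp only [bad, Finset.mem_filter, Finset.mem_univ, true_and]
    rw [hv i hi]
    exact hcon
  let F : Set (Set ℕ) → Filter P := fun γ =>
    { sets := {T | ∃ (J : Finset Idx) (N : ℕ), ∀ p : P, N ≤ p.1 →
        (∀ i ∈ J, p ∈ M i (ek γ i)) → p ∈ T}
      univ_sets := ⟨∅, 0, fun _ _ _ => trivial⟩
      sets_of_superset := by
        rintro S T ⟨J, N, h⟩ hST
        exact ⟨J, N, fun p h1 h2 => hST (h p h1 h2)⟩
      inter_sets := by
        rintro S T ⟨J, N, h⟩ ⟨J', N', h'⟩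
        refine ⟨J ∪ J', max N N', fun p h1 h2 => ⟨h p ?_ ?_, h' p ?_ ?_⟩⟩
        · exact (le_max_left _ _).trans h1
        · exact fun i hi => h2 i (Finset.mem_union_left _ hi)
        · exact (le_max_right _ _).trans h1
        · exact fun i hi => h2 i (Finset.mem_union_right _ hi) }
  have hF : ∀ γ T, T ∈ F γ ↔ ∃ (J : Finset Idx) (N : ℕ), ∀ p : P, N ≤ p.1 →
        (∀ i ∈ J, p ∈ M i (ek γ i)) → p ∈ T := fun γ T => Iff.rfl
  refine ⟨F, ?_, ?_, ?_⟩
  · intro γ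
    rw [← Filter.empty_mem_iff_bot.not.trans Filter.neBot_iff.symm, hF]
    rintro ⟨J, N, h⟩
    obtain ⟨p, hp1, hp2⟩ := hM J (ek γ) N
    exact h p hp1 hp2
  · intro γ T hT
    rw [Filter.mem_cofinite] at hT
    rw [hF]
    obtain ⟨N, hN⟩ := (hT.image Sigma.fst).bddAbove
    refine ⟨∅, N + 1, fun p hp _ => ?_⟩
    by_contra hpT
    have := hN ⟨p, hpT, rfl⟩
    omega
  · intro g hg σ hσ
    obtain ⟨i, hi, hn⟩ := ek_spec g hg ⟨σ, hσ⟩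
    refine ⟨fun n => M i n, fun n => ?_, ?_⟩
    · rw [hF]
      refine ⟨{i}, 0, fun p _ h => ?_⟩
      have := h i (Finset.mem_singleton_self i)
      rwa [hn] at this
    · intro n m hnm p hp q hq b b'
      have := A_disj _ _ hnm hp hq b b'
      rwa [hi] at this

/-! ### The space -/

lemma countable_reach {X : Type} (c : X → (P × Bool ↪ X)) (x : X) :
    ({y | Relation.ReflTransGen (fun y z => ∃ q, c y q = z) x y} : Set X).Countable := by
  let S : ℕ → Set X := fun n => Nat.rec {x} (fun _ B => ⋃ y ∈ B, range (c y)) n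
  have hS : ∀ n, (S n).Countable := by
    intro n
    induction n with
    | zero => exact countable_singleton x
    | succ n ih => exact ih.biUnion fun y _ => countable_range _
  refine (countable_iUnion hS).mono ?_
  intro y hy
  induction hy with
  | refl => exact mem_iUnion.2 ⟨0, rfl⟩
  | tail _ h ih =>
    obtain ⟨n, hn⟩ := mem_iUnion.1 ih
    obtain ⟨q, rfl⟩ := h
    exact mem_iUnion.2 ⟨n + 1, mem_biUnion hn (mem_range_self q)⟩

lemma backward (κ : Cardinal.{0}) (h1 : Cardinal.continuum ≤ κ)
    (h2 : κ ≤ 2 ^ Cardinal.continuum) (hκ : κ ^ ℵ₀ = κ) :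
    ∃ (X : Type) (_ : TopologicalSpace X),
        IsSAU X ∧ (∀ x : X, ∃ U ∈ nhds x, U.Countable) ∧ #X = κ := by
  obtain ⟨F, hbot, hcof, hsep⟩ := exists_filters
  obtain ⟨X, rfl⟩ : ∃ X : Type, #X = κ := ⟨κ.out, κ.mk_out⟩
  have hXinf : Infinite X := by
    rw [Cardinal.infinite_iff]; exact aleph0_le_continuum.trans h1
  have hPinf : Infinite P := Infinite.of_injective (fun s : ℕ => (⟨s, ⟨0, Nat.succ_pos _⟩⟩ : P))
    (fun a b h => congrArg Sigma.fst h)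
  obtain ⟨γ⟩ : Nonempty (X ↪ Set (Set ℕ)) := by
    rw [← Cardinal.le_def]; simpa using h2
  have hPB : #(P × Bool) = ℵ₀ := Cardinal.mk_eq_aleph0 _
  have hne : Nonempty (P × Bool ↪ X) := by
    rw [← Cardinal.le_def, hPB]; exact aleph0_le_continuum.trans h1
  obtain ⟨jj⟩ : Nonempty ((P × Bool ↪ X) ↪ X) := by
    rw [← Cardinal.le_def]
    calc #(P × Bool ↪ X) ≤ #(P × Bool → X) :=
          Cardinal.mk_le_of_injective (f := fun f => (f : P × Bool → X)) DFunLike.coe_injective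
      _ = #X := by rw [← Cardinal.power_def, hPB, hκ]
  let c : X → (P × Bool ↪ X) := Function.invFun jj
  have hc : Function.Surjective c := Function.invFun_surjective jj.injective
  let τ : TopologicalSpace X :=
    { IsOpen := fun U => ∀ x ∈ U, {p | ∀ b, c x (p, b) ∈ U} ∈ F (γ x)
      isOpen_univ := by
        intro x _
        exact Filter.mem_of_superset Filter.univ_mem fun p _ b => trivial
      isOpen_inter := by
        intro U V hU hV x hx
        filter_upwards [hU x hx.1, hV x hx.2] with p h h' b
        exact ⟨h b, h' b⟩
      isOpen_sUnion := by
        intro S hS x hx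
        obtain ⟨U, hUS, hxU⟩ := hx
        filter_upwards [hS U hUS x hxU] with p h b
        exact ⟨U, hUS, h b⟩ }
  have hopen : ∀ U : Set X, IsOpen U ↔ ∀ x ∈ U, {p | ∀ b, c x (p, b) ∈ U} ∈ F (γ x) :=
    fun U => Iff.rfl
  have hrem : ∀ x a, {p | ∀ b, c x (p, b) ≠ a} ∈ F (γ x) := by
    intro x a
    apply hcof
    rw [Filter.mem_cofinite]
    have : (Prod.fst '' ((c x) ⁻¹' {a})).Finite :=
      ((finite_singleton a).preimage (c x).injective.injOn).image _
    refine this.subset ?_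
    intro p hp
    simp only [mem_compl_iff, mem_ofPred_eq, not_forall, not_not] at hp
    obtain ⟨b, hb⟩ := hp
    exact ⟨(p, b), hb, rfl⟩
  have hcrowd : ∀ x : X, ¬ IsOpen ({x} : Set X) := by
    intro x hx
    have h := (hopen _).1 hx x rfl
    have h' := Filter.inter_mem h (hrem x x)
    obtain ⟨p, hp1, hp2⟩ := (hbot (γ x)).nonempty_of_mem h'
    exact hp2 true (hp1 true)
  let R : X → X → Prop := fun y z => ∃ q, c y q = z
  have hCc : ∀ x, ({y | Relation.ReflTransGen R x y} : Set X).Countable := countable_reach c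
  have hT2 : T2Space X := by
    refine ⟨fun α β hαβ => ?_⟩
    let C : Set X := {y | Relation.ReflTransGen R α y} ∪ {y | Relation.ReflTransGen R β y}
    have hCcount : C.Countable := (hCc α).union (hCc β)
    have hCR : ∀ y ∈ C, ∀ q, c y q ∈ C := by
      rintro y (h | h) q
      · exact Or.inl (Relation.ReflTransGen.tail h ⟨q, rfl⟩)
      · exact Or.inr (Relation.ReflTransGen.tail h ⟨q, rfl⟩)
    have hαC : α ∈ C := Or.inl Relation.ReflTransGen.refl
    have hβC : β ∈ C := Or.inr Relation.ReflTransGen.refl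
    have hCinf : C.Infinite :=
      (infinite_range_of_injective (c α).injective).mono
        (by rintro _ ⟨q, rfl⟩; exact hCR α hαC q)
    have : Countable C := hCcount.to_subtype
    have : Infinite C := hCinf.to_subtype
    obtain ⟨hden⟩ := nonempty_denumerable C
    let e : C ≃ ℕ := Denumerable.eqv C
    let x : ℕ → X := fun n => e.symm n
    have hxC : ∀ n, x n ∈ C := fun n => (e.symm n).2
    have hxinj : Function.Injective x := fun a b h => e.symm.injective (Subtype.ext h)
    have hxsurj : ∀ y ∈ C, ∃ n, x n = y := fun y hy => ⟨e ⟨y, hy⟩, by simp [x]⟩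
    obtain ⟨T, hT, hTd⟩ := hsep (fun n => γ (x n)) (γ.injective.comp hxinj)
      (fun n q => e ⟨c (x n) q, hCR _ (hxC n) q⟩) (by
        intro n a b h
        have := e.injective h
        exact (c (x n)).injective (congrArg Subtype.val this))
    let E : X → X → Prop := fun y z =>
      ∃ n, y = x n ∧ ∃ p ∈ T n, ∃ b, c y (p, b) = z ∧ z ≠ α ∧ z ≠ β
    have hEu : ∀ y y' z, E y z → E y' z → y = y' := by
      rintro y y' z ⟨n, rfl, p, hp, b, hz, -⟩ ⟨m, rfl, q, hq, b', hz', -⟩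
      by_contra hne
      have hnm : n ≠ m := fun h => hne (by rw [h])
      refine hTd n m hnm p hp q hq b b' ?_
      simp only [hz, hz']
    have hEC : ∀ a ∈ C, ∀ z, Relation.ReflTransGen E a z → z ∈ C := by
      intro a ha z hz
      induction hz with
      | refl => exact ha
      | tail _ h ih =>
        obtain ⟨n, -, p, -, b, hz, -⟩ := h
        rw [← hz]
        exact hCR _ ih _
    have hopenU : ∀ a ∈ C, IsOpen {z | Relation.ReflTransGen E a z} := by
      intro a ha
      rw [hopen]
      intro y hy
      obtain ⟨n, rfl⟩ := hxsurj y (hEC a ha y hy)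
      filter_upwards [hT n, hrem (x n) α, hrem (x n) β] with p h1 h2 h3 b
      exact Relation.ReflTransGen.tail hy ⟨n, rfl, p, h1, b, rfl, h2 b, h3 b⟩
    refine ⟨_, _, hopenU α hαC, hopenU β hβC, Relation.ReflTransGen.refl,
      Relation.ReflTransGen.refl, ?_⟩
    rw [Set.disjoint_left]
    intro z hz
    simp only [mem_ofPred_eq] at hz ⊢
    induction hz with
    | refl =>
      intro h
      rcases Relation.ReflTransGen.cases_tail h with h | ⟨y, -, n, -, p, -, b, -, h, -⟩
      · exact hαβ h
      · exact h rfl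
    | tail _ hE ih =>
      intro h
      rcases Relation.ReflTransGen.cases_tail h with h | ⟨y', hy', hE'⟩
      · obtain ⟨n, -, p, -, b, -, -, h'⟩ := hE
        exact h' h
      · rw [hEu _ _ _ hE hE'] at ih
        exact ih hy'
  refine ⟨X, τ, ⟨hT2, ?_, ?_⟩, ?_, rfl⟩
  · obtain ⟨x, y, hxy⟩ := exists_pair_ne X
    exact ⟨x, y, hxy, hcrowd x, hcrowd y⟩
  · intro G H hG hH hGi hHi
    by_contra hcon
    rw [Set.not_nonempty_iff_eq_empty, ← Set.disjoint_iff_inter_eq_empty] at hcon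
    obtain ⟨eP⟩ := nonempty_denumerable P
    let e : P ≃ ℕ := Denumerable.eqv P
    let a : ℕ ↪ G := hGi.natEmbedding
    let a' : ℕ ↪ H := hHi.natEmbedding
    let f : P × Bool → X := fun q => if q.2 then a (e q.1) else a' (e q.1)
    have hf : Function.Injective f := by
      have hd : ∀ n m, (a n : X) ≠ a' m := fun n m h =>
        Set.disjoint_left.1 hcon (a n).2 (h ▸ (a' m).2)
      rintro ⟨p, b⟩ ⟨q, b'⟩ h
      cases b <;> cases b'
      · have := e.injective (a'.injective (Subtype.ext h)); exact Prod.ext this rfl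
      · exact absurd h.symm (hd _ _)
      · exact absurd h (hd _ _)
      · have := e.injective (a.injective (Subtype.ext h)); exact Prod.ext this rfl
    obtain ⟨x, hx⟩ := hc ⟨f, hf⟩
    have hxf : ∀ q, c x q = f q := fun q => by rw [hx]; rfl
    have hxG : x ∈ G := by
      by_contra hxG
      have h := (hopen _).1 hG.isOpen_compl x hxG
      obtain ⟨p, hp⟩ := (hbot (γ x)).nonempty_of_mem h
      have := hp true
      rw [hxf] at this
      exact this (a (e p)).2
    have hxH : x ∈ H := by
      by_contra hxH
      have h := (hopen _).1 hH.isOpen_compl x hxH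
      obtain ⟨p, hp⟩ := (hbot (γ x)).nonempty_of_mem h
      have := hp false
      rw [hxf] at this
      exact this (a' (e p)).2
    exact Set.disjoint_left.1 hcon hxG hxH
  · intro x
    refine ⟨{y | Relation.ReflTransGen R x y}, IsOpen.mem_nhds ?_ Relation.ReflTransGen.refl, hCc x⟩
    rw [hopen]
    intro y hy
    exact Filter.mem_of_superset Filter.univ_mem fun p _ b =>
      Relation.ReflTransGen.tail hy ⟨(p, b), rfl⟩

end SAUProof

/-- for `𝔠 ≤ κ ≤ 2^𝔠`, there is a locally countable SAU space of
cardinality `κ` iff `κ^ω = κ`. -/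
theorem stmt16 (κ : Cardinal.{0}) (h1 : Cardinal.continuum ≤ κ)
    (h2 : κ ≤ 2 ^ Cardinal.continuum) :
    (∃ (X : Type) (_ : TopologicalSpace X),
        IsSAU X ∧ (∀ x : X, ∃ U ∈ nhds x, U.Countable) ∧ #X = κ) ↔
      κ ^ ℵ₀ = κ := by
  constructor
  · rintro ⟨X, _, hX, hc, hκ⟩
    exact SAUProof.forward κ h1 X hX hc hκ
  · exact SAUProof.backward κ h1 h2
end
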